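/- arXiv:1807.05803 — 11 statements merged into one kernel-verified Lean document; each statement's English description precedes it below -/
import Mathlib

section
/- Let G be a directed multigraph and let s, t be distinct vertices. Then there exists an s-t min-cut M such that every s-t min-cut M' satisfies M' ≤ M, i.e., T_M ⊆ T_{M'} (M is later than every s-t min-cut). -/
/-!
The minimum cuts form a lattice, by submodularity of the cut function, so there is a latest one.

For a vertex set `X` let `δ X` be the set of arcs entering `X`. Every cut `M` contains
`δ T_M` (`enter_targetSide_subset`), and conversely, if `t ∈ X` and `s ∉ X`, then `δ X` is a cut
whose target side lies inside `X` (`isCutIn_enter`, `targetSide_enter_subset`).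

Choose a minimum cut `M` whose target side has the fewest vertices, and let `M'` be any minimum
cut. By submodularity (`ncard_enter_inter_add_union_le`), `|δ (T_M ∩ T_M')| + |δ (T_M ∪ T_M')|`
is at most `|M| + |M'|`; both sets on the left are cuts, so both are minimum cuts. The target side
of `δ (T_M ∩ T_M')` lies in `T_M ∩ T_M'`, so the choice of `M` forces `T_M ∩ T_M' = T_M`.
-/

namespace APMC

/-- `Walk tl hd s t p` : the list of arcs `p` forms a path from `s` to `t` in the
directed multigraph with tail map `tl` and head map `hd`
(the empty path goes from a vertex to itself). -/
inductive Walk {V E : Type} (tl hd : E → V) : V → V → List E → Prop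
  | nil (v : V) : Walk tl hd v v []
  | cons (e : E) {v : V} {p : List E} :
      Walk tl hd (hd e) v p → Walk tl hd (tl e) v (e :: p)

variable {V E : Type}

/-- A walk from `s` to `t` using only arcs from `A`. -/
def WalkIn (tl hd : E → V) (A : Set E) (s t : V) (p : List E) : Prop :=
  Walk tl hd s t p ∧ ∀ e ∈ p, e ∈ A

/-- `t` is reachable from `s` in `(V, A)`. -/
def Reaches (tl hd : E → V) (A : Set E) (s t : V) : Prop :=
  ∃ p, WalkIn tl hd A s t p

/-- `M` is an `s`-`t` cut in `(V, A)`: every path from `s` to `t` within `A`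
contains an arc of `M`. -/
def IsCutIn (tl hd : E → V) (A : Set E) (s t : V) (M : Set E) : Prop :=
  ∀ p, WalkIn tl hd A s t p → ∃ e ∈ p, e ∈ M

/-- The target side `T_M` of a cut `M`: vertices admitting a path to `t` avoiding `M`. -/
def targetSide (tl hd : E → V) (A : Set E) (t : V) (M : Set E) : Set V :=
  {x | ∃ p, WalkIn tl hd A x t p ∧ ∀ e ∈ p, e ∉ M}

/-- The source side `S_M` of a cut `M`: vertices admitting a path from `s` avoiding `M`. -/
def sourceSide (tl hd : E → V) (A : Set E) (s : V) (M : Set E) : Set V :=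
  {x | ∃ p, WalkIn tl hd A s x p ∧ ∀ e ∈ p, e ∉ M}

/-- `M` is an `s`-`t` min-cut in `(V, A)`: a cut of minimum cardinality. -/
def IsMinCutIn (tl hd : E → V) (A : Set E) (s t : V) (M : Set E) : Prop :=
  IsCutIn tl hd A s t M ∧ ∀ M' : Set E, IsCutIn tl hd A s t M' → M.ncard ≤ M'.ncard

/-- `M` is a minimal `s`-`t` cut in `(V, A)`: no proper subset of `M` is a cut. -/
def IsMinimalCutIn (tl hd : E → V) (A : Set E) (s t : V) (M : Set E) : Prop :=
  IsCutIn tl hd A s t M ∧ ∀ M' : Set E, M' ⊂ M → ¬ IsCutIn tl hd A s t M'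

/-- `StrictLater ... M M'` means `M > M'`, i.e. `T_M ⊆ T_{M'}` and `T_M ≠ T_{M'}`. -/
def StrictLater (tl hd : E → V) (A : Set E) (t : V) (M M' : Set E) : Prop :=
  targetSide tl hd A t M ⊆ targetSide tl hd A t M' ∧
    targetSide tl hd A t M ≠ targetSide tl hd A t M'

/-- `StrictEarlier ... M M'` means `M < M'`, i.e. `S_M ⊆ S_{M'}` and `S_M ≠ S_{M'}`. -/
def StrictEarlier (tl hd : E → V) (A : Set E) (s : V) (M M' : Set E) : Prop :=
  sourceSide tl hd A s M ⊆ sourceSide tl hd A s M' ∧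
    sourceSide tl hd A s M ≠ sourceSide tl hd A s M'

/-- `M` is an `s`-`t`-latest cut in `(V, A)`:
no `s`-`t` cut `M'` satisfies `M' > M` and `|M'| ≤ |M|`. -/
def IsLatestIn (tl hd : E → V) (A : Set E) (s t : V) (M : Set E) : Prop :=
  IsCutIn tl hd A s t M ∧
    ¬ ∃ M' : Set E, IsCutIn tl hd A s t M' ∧ StrictLater tl hd A t M' M ∧
      M'.ncard ≤ M.ncard

/-- `M` is an `s`-`t`-earliest cut in `(V, A)`:
no `s`-`t` cut `M'` satisfies `M' < M` and `|M'| ≤ |M|`. -/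
def IsEarliestIn (tl hd : E → V) (A : Set E) (s t : V) (M : Set E) : Prop :=
  IsCutIn tl hd A s t M ∧
    ¬ ∃ M' : Set E, IsCutIn tl hd A s t M' ∧ StrictEarlier tl hd A s M' M ∧
      M'.ncard ≤ M.ncard

/-- `A₁, A₂` is an arc split of the arc set: a partition of the arcs such that
no arc of `A₁` starts where an arc of `A₂` ends. -/
def ArcSplit (tl hd : E → V) (A₁ A₂ : Set E) : Prop :=
  A₁ ∪ A₂ = Set.univ ∧ A₁ ∩ A₂ = ∅ ∧
    ∀ e₁ ∈ A₂, ∀ e₂ ∈ A₁, hd e₁ ≠ tl e₂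

/-- `M` is split-covering with respect to the arc split `A₁, A₂` and vertices `s`, `t`. -/
def SplitCovering (tl hd : E → V) (A₁ A₂ : Set E) (s t : V) (M : Set E) : Prop :=
  ∀ v : V, ∃ Mv ⊆ M,
    ((s ≠ v ∧ v ≠ t ∧ (¬ Reaches tl hd A₁ s v ∨ ¬ Reaches tl hd A₂ v t)) ∨
     IsEarliestIn tl hd A₁ s v Mv ∨
     IsLatestIn tl hd A₂ v t Mv)

/-- `M` is late-covering with respect to the `s`-`t` cut `C`. -/
def LateCovering (tl hd : E → V) (t : V) (C M : Set E) : Prop :=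
  ∀ e ∈ C, e ∈ M ∨ ∃ M' ⊆ M, IsLatestIn tl hd Set.univ (hd e) t M'

end APMC

open APMC

namespace APMC

/-- The set `δ X` of arcs entering the vertex set `X`. -/
def enter {V E : Type} (tl hd : E → V) (X : Set V) : Set E :=
  {e | tl e ∉ X ∧ hd e ∈ X}

theorem enter_targetSide_subset {V E : Type} (tl hd : E → V) (t : V) (M : Set E) :
    enter tl hd (targetSide tl hd Set.univ t M) ⊆ M := by
  rintro e ⟨h1, p, ⟨hw, -⟩, hp⟩
  by_contra he
  refine h1 ⟨e :: p, ⟨Walk.cons e hw, fun _ _ => Set.mem_univ _⟩, ?_⟩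
  intro f hf
  rcases List.mem_cons.1 hf with rfl | hf
  · exact he
  · exact hp f hf

/-- A walk that starts outside `X` and ends inside `X` has to enter `X` along some arc. -/
theorem Walk.exists_enter {V E : Type} {tl hd : E → V} {x y : V} {p : List E}
    (hw : Walk tl hd x y p) {X : Set V} (hx : x ∉ X) (hy : y ∈ X) :
    ∃ e ∈ p, e ∈ enter tl hd X := by
  induction hw with
  | nil v => exact absurd hy hx
  | cons e hw ih =>
    by_cases h : hd e ∈ X
    · exact ⟨e, List.mem_cons_self, hx, h⟩
    · obtain ⟨f, hf, hfX⟩ := ih h hy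
      exact ⟨f, List.mem_cons_of_mem _ hf, hfX⟩

theorem isCutIn_enter {V E : Type} {tl hd : E → V} {s t : V} {X : Set V}
    (hs : s ∉ X) (ht : t ∈ X) : IsCutIn tl hd Set.univ s t (enter tl hd X) :=
  fun _ hp => hp.1.exists_enter hs ht

theorem targetSide_enter_subset {V E : Type} {tl hd : E → V} {t : V} {X : Set V} (ht : t ∈ X) :
    targetSide tl hd Set.univ t (enter tl hd X) ⊆ X := by
  rintro x ⟨p, ⟨hw, -⟩, hp⟩
  by_contra hx
  obtain ⟨e, he, heX⟩ := hw.exists_enter hx ht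
  exact hp e he heX

theorem target_mem_targetSide {V E : Type} (tl hd : E → V) (t : V) (M : Set E) :
    t ∈ targetSide tl hd Set.univ t M :=
  ⟨[], ⟨Walk.nil t, by simp⟩, by simp⟩

theorem IsCutIn.source_notMem_targetSide {V E : Type} {tl hd : E → V} {s t : V} {M : Set E}
    (hM : IsCutIn tl hd Set.univ s t M) : s ∉ targetSide tl hd Set.univ t M := by
  rintro ⟨p, hw, hp⟩
  obtain ⟨e, he, heM⟩ := hM p hw
  exact hp e he heM

/-- Submodularity of `X ↦ |δ X|`. -/
theorem ncard_enter_inter_add_union_le {V E : Type} [Finite E] (tl hd : E → V) (X Y : Set V) :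
    (enter tl hd (X ∩ Y)).ncard + (enter tl hd (X ∪ Y)).ncard ≤
      (enter tl hd X).ncard + (enter tl hd Y).ncard := by
  rw [← Set.ncard_union_add_ncard_inter (enter tl hd (X ∩ Y)),
    ← Set.ncard_union_add_ncard_inter (enter tl hd X)]
  refine Nat.add_le_add (Set.ncard_le_ncard ?_ (Set.toFinite _))
    (Set.ncard_le_ncard ?_ (Set.toFinite _)) <;>
  · intro e
    simp only [enter, Set.mem_union, Set.mem_inter_iff, Set.mem_ofPred_eq]
    tauto

end APMC

/-- There exists an `s`-`t` min-cut `M` that is later than every `s`-`t` min-cut `M'`,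
i.e. `T_M ⊆ T_{M'}` for every `s`-`t` min-cut `M'`. -/
theorem exists_min_cut_later_than_all {V E : Type} [Fintype V] [Fintype E]
    (tl hd : E → V) (s t : V) (hst : s ≠ t) :
    ∃ M : Set E, IsMinCutIn tl hd Set.univ s t M ∧
      ∀ M' : Set E, IsMinCutIn tl hd Set.univ s t M' →
        targetSide tl hd Set.univ t M ⊆ targetSide tl hd Set.univ t M' := by
  classical
  -- The set of all arcs is a cut because `s ≠ t`, so cuts, and hence minimum cuts, exist.
  have huniv : IsCutIn tl hd Set.univ s t Set.univ := by
    rintro p ⟨hw, -⟩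
    obtain ⟨e, he, -⟩ := hw.exists_enter (X := {t}) (by simpa using hst) rfl
    exact ⟨e, he, Set.mem_univ e⟩
  obtain ⟨M₀, hM₀, hmin₀⟩ := Set.exists_min_image {M : Set E | IsCutIn tl hd Set.univ s t M}
    Set.ncard (Set.toFinite _) ⟨_, huniv⟩
  obtain ⟨M, hM, hleast⟩ := Set.exists_min_image {M : Set E | IsMinCutIn tl hd Set.univ s t M}
    (fun M => (targetSide tl hd Set.univ t M).ncard) (Set.toFinite _) ⟨M₀, hM₀, hmin₀⟩
  refine ⟨M, hM, fun M' hM' => ?_⟩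
  set T := targetSide tl hd Set.univ t M with hT
  set T' := targetSide tl hd Set.univ t M' with hT'
  have hsT : s ∉ T := hM.1.source_notMem_targetSide
  have hsT' : s ∉ T' := hM'.1.source_notMem_targetSide
  have htT : t ∈ T := target_mem_targetSide tl hd t M
  have htT' : t ∈ T' := target_mem_targetSide tl hd t M'
  have hinter : IsCutIn tl hd Set.univ s t (enter tl hd (T ∩ T')) :=
    isCutIn_enter (fun h => hsT h.1) ⟨htT, htT'⟩
  have hunion : IsCutIn tl hd Set.univ s t (enter tl hd (T ∪ T')) :=
    isCutIn_enter (fun h => h.elim hsT hsT') (Or.inl htT)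
  have hsub := ncard_enter_inter_add_union_le tl hd T T'
  have h1 : (enter tl hd T).ncard ≤ M.ncard :=
    Set.ncard_le_ncard (enter_targetSide_subset tl hd t M) (Set.toFinite _)
  have h2 : (enter tl hd T').ncard ≤ M'.ncard :=
    Set.ncard_le_ncard (enter_targetSide_subset tl hd t M') (Set.toFinite _)
  have h3 := hM'.2 _ hunion
  have hmin : IsMinCutIn tl hd Set.univ s t (enter tl hd (T ∩ T')) :=
    ⟨hinter, fun N hN => le_trans (by omega) (hM.2 N hN)⟩
  have hcard : T.ncard ≤ (T ∩ T').ncard :=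
    (hleast _ hmin).trans
      (Set.ncard_le_ncard (targetSide_enter_subset ⟨htT, htT'⟩) (Set.toFinite _))
  have heq : T ∩ T' = T :=
    Set.eq_of_subset_of_ncard_le Set.inter_subset_left hcard (Set.toFinite _)
  exact Set.inter_eq_left.1 heq
end

section
/- Let G be a directed multigraph with distinct vertices s, t, and let M be a minimal s-t cut. Then M is exactly the set of arcs whose tail lies in the source side S_M and whose head lies in the target side T_M; that is, M = {e ∈ E : tail(e) ∈ S_M and head(e) ∈ T_M}. -/
open APMC

theorem APMC.Walk.append {V E : Type} {tl hd : E → V} {u v w : V} {p q : List E}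
    (hp : Walk tl hd u v p) (hq : Walk tl hd v w q) : Walk tl hd u w (p ++ q) := by
  induction hp with
  | nil => exact hq
  | cons e _ ih => exact Walk.cons e (ih hq)

/-- If `e` is the only arc of `M` on a walk from `u`, the part of the walk before the first
occurrence of `e` witnesses that the tail of `e` is on the source side. -/
theorem APMC.Walk.tl_mem_sourceSide {V E : Type} {tl hd : E → V} {u v : V} {p : List E}
    {M : Set E} {e : E} (hp : Walk tl hd u v p) (honly : ∀ f ∈ p, f ∈ M → f = e) (he : e ∈ p) :
    tl e ∈ sourceSide tl hd Set.univ u M := by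
  induction hp with
  | nil => simp at he
  | cons f _ ih =>
    by_cases hfe : f = e
    · subst hfe
      exact ⟨[], ⟨Walk.nil _, by simp⟩, by simp⟩
    · obtain ⟨q, hq, hqM⟩ := ih (fun g hg => honly g (List.mem_cons_of_mem _ hg))
        ((List.mem_cons.1 he).resolve_left (Ne.symm hfe))
      refine ⟨f :: q, ⟨Walk.cons f hq.1, by simp⟩, fun g hg => ?_⟩
      rcases List.mem_cons.1 hg with rfl | hg
      · exact fun hgM => hfe (honly g List.mem_cons_self hgM)
      · exact hqM g hg

/-- If `e` is the only arc of `M` on a walk to `v`, the part of the walk after the last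
occurrence of `e` witnesses that the head of `e` is on the target side. -/
theorem APMC.Walk.hd_mem_targetSide {V E : Type} {tl hd : E → V} {u v : V} {p : List E}
    {M : Set E} {e : E} (hp : Walk tl hd u v p) (honly : ∀ f ∈ p, f ∈ M → f = e) (he : e ∈ p) :
    hd e ∈ targetSide tl hd Set.univ v M := by
  induction hp with
  | nil => simp at he
  | @cons f v p hp ih =>
    have honly' : ∀ g ∈ p, g ∈ M → g = e := fun g hg => honly g (List.mem_cons_of_mem _ hg)
    by_cases hep : e ∈ p
    · exact ih honly' hep
    · obtain rfl := (List.mem_cons.1 he).resolve_right hep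
      exact ⟨p, ⟨hp, by simp⟩, fun g hg hgM => hep (honly' g hg hgM ▸ hg)⟩

/-- A minimal `s`-`t` cut `M` is exactly the set of arcs with tail in the source side
`S_M` and head in the target side `T_M`. -/
theorem minimal_cut_eq_crossing_arcs {V E : Type} [Fintype V] [Fintype E]
    (tl hd : E → V) (s t : V) (hst : s ≠ t) (M : Set E)
    (hM : IsMinimalCutIn tl hd Set.univ s t M) :
    M = {e : E | tl e ∈ sourceSide tl hd Set.univ s M ∧
                 hd e ∈ targetSide tl hd Set.univ t M} := by
  obtain ⟨hcut, hmin⟩ := hM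
  ext e
  constructor
  · intro he
    have hnot := hmin (M \ {e}) (Set.sdiff_singleton_ssubset.2 he)
    simp only [IsCutIn, not_forall, not_exists, not_and] at hnot
    obtain ⟨p, hp, hpM⟩ := hnot
    have honly : ∀ f ∈ p, f ∈ M → f = e := fun f hf hfM =>
      by_contra fun hfe => hpM f hf ⟨hfM, hfe⟩
    obtain ⟨f, hf, hfM⟩ := hcut p hp
    have hep : e ∈ p := honly f hf hfM ▸ hf
    exact ⟨hp.1.tl_mem_sourceSide honly hep, hp.1.hd_mem_targetSide honly hep⟩
  · rintro ⟨⟨p, hp, hpM⟩, ⟨q, hq, hqM⟩⟩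
    obtain ⟨f, hf, hfM⟩ := hcut (p ++ e :: q) ⟨hp.1.append (Walk.cons e hq.1), by simp⟩
    rcases List.mem_append.1 hf with hf | hf
    · exact absurd hfM (hpM f hf)
    · rcases List.mem_cons.1 hf with rfl | hf
      · exact hfM
      · exact absurd hfM (hqM f hf)
end

section
/- Let G be a directed multigraph with distinct vertices s, t. For every k ≥ 1, the number of s-t-latest s-t k-cuts is at most the Catalan number C_{k-1} = (1/k)·binom(2k-2, k-1), and the number of s-t-latest s-t ≤k-cuts is at most 4^k. -/
namespace APMC

open Classical

/-! ### Ballot numbers -/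

/-- Ballot numbers, in the form in which they arise from the branching on cuts: `ballot d l` bounds
the number of latest cuts of size `d + l` when the minimum cut size is `l`. -/
def ballot : ℕ → ℕ → ℕ
  | 0, _ => 1
  | _ + 1, 0 => 0
  | d + 1, l + 1 => ballot (d + 1) l + ballot d (l + 2)
termination_by d l => (d, l)

lemma ballot_zero (l : ℕ) : ballot 0 l = 1 := by rw [ballot]

lemma ballot_succ_zero (d : ℕ) : ballot (d + 1) 0 = 0 := by rw [ballot]

lemma ballot_succ_succ (d l : ℕ) :
    ballot (d + 1) (l + 1) = ballot (d + 1) l + ballot d (l + 2) := by rw [ballot]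

/-- The reflection formula for ballot numbers, with the subtraction moved to the left side. -/
lemma ballot_add_choose (d : ℕ) : ∀ l, ballot d (l + 1) + (2 * d + l).choose (d + l + 1) =
    (2 * d + l).choose (d + l) := by
  induction d with
  | zero => intro l; simp [ballot_zero]
  | succ d ihd =>
    intro l
    induction l with
    | zero =>
      have h := ihd 1
      have h1 := Nat.choose_succ_succ (2 * d + 1) (d + 1)
      have h2 := Nat.choose_succ_succ (2 * d + 1) d
      have h3 : (2 * d + 1).choose (d + 1) = (2 * d + 1).choose d :=
        Nat.choose_symm_of_eq_add (by omega)
      rw [ballot_succ_succ, ballot_succ_zero]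
      simp only [Nat.succ_eq_add_one] at *
      have e1 : 2 * (d + 1) + 0 = 2 * d + 1 + 1 := by ring
      rw [e1]
      simp only [Nat.add_zero, Nat.zero_add, Nat.reduceAdd] at *
      omega
    | succ l ihl =>
      have h := ihd (l + 2)
      have h1 := Nat.choose_succ_succ (2 * d + l + 2) (d + l + 2)
      have h2 := Nat.choose_succ_succ (2 * d + l + 2) (d + l + 1)
      rw [ballot_succ_succ]
      simp only [Nat.succ_eq_add_one] at *
      have e1 : 2 * (d + 1) + (l + 1) = 2 * d + l + 2 + 1 := by ring
      have e2 : 2 * (d + 1) + l = 2 * d + l + 2 := by ring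
      have e3 : d + 1 + l = d + l + 1 := by ring
      have e4 : d + 1 + (l + 1) = d + l + 2 := by ring
      have e5 : 2 * d + (l + 2) = 2 * d + l + 2 := by ring
      have e6 : d + (l + 2) = d + l + 2 := by ring
      have e7 : d + l + 1 + 1 = d + l + 2 := by ring
      rw [e2, e3, e7] at ihl
      rw [e5, e6] at h
      rw [e7] at h2
      rw [e1, e4]
      have e8 : l + 1 + 2 = l + 2 + 1 := by ring
      rw [e8]
      omega

lemma ballot_one (d : ℕ) : ballot d 1 = catalan d := by
  have h := ballot_add_choose d 0
  have h1 := Nat.choose_succ_right_eq (2 * d) d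
  have h2 := succ_mul_catalan_eq_centralBinom d
  rw [Nat.centralBinom_eq_two_mul_choose] at h2
  have h3 : 2 * d - d = d := by omega
  rw [h3] at h1
  simp only [Nat.add_zero, Nat.zero_add] at h
  apply Nat.eq_of_mul_eq_mul_left (Nat.succ_pos d)
  rw [Nat.succ_eq_add_one, h2]
  nlinarith

lemma catalan_le_four_pow (d : ℕ) : catalan d ≤ 4 ^ d := by
  have h2 := succ_mul_catalan_eq_centralBinom d
  have h3 : Nat.centralBinom d ≤ 4 ^ d := by
    rw [Nat.centralBinom_eq_two_mul_choose]
    calc (2 * d).choose d ≤ 2 ^ (2 * d) := Nat.choose_le_two_pow _ _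
      _ = 4 ^ d := by rw [pow_mul]; norm_num
  nlinarith

/-! ### Entering arcs and submodularity -/

section Cuts

variable {V E : Type} (tl hd : E → V)

/-- The arcs of `A` entering the vertex set `T`. -/
noncomputable def entering (A : Finset E) (T : Set V) : Finset E :=
  A.filter fun e => tl e ∉ T ∧ hd e ∈ T

/-- The sides `T ∋ t` avoiding the sources `S` that are entered by exactly `k` arcs of `A`, by more
than `k` after any shrinking, and whose set of entering arcs is minimal among all such cuts. -/
def tight (A : Finset E) (S : Set V) (t : V) (k : ℕ) : Set (Set V) :=
  {T | t ∈ T ∧ Disjoint T S ∧ (entering tl hd A T).card = k ∧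
    (∀ T', T' ⊂ T → t ∈ T' → k < (entering tl hd A T').card) ∧
    ∀ U, t ∈ U → Disjoint U S → entering tl hd A U ⊆ entering tl hd A T →
      entering tl hd A U = entering tl hd A T}

lemma card_entering_submodular (A : Finset E) (X Y : Set V) :
    (entering tl hd A (X ∩ Y)).card + (entering tl hd A (X ∪ Y)).card ≤
      (entering tl hd A X).card + (entering tl hd A Y).card := by
  simp only [entering, Finset.card_filter, ← Finset.sum_add_distrib]
  refine Finset.sum_le_sum fun e _ => ?_
  by_cases h1 : tl e ∈ X <;> by_cases h2 : tl e ∈ Y <;> by_cases h3 : hd e ∈ X <;>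
    by_cases h4 : hd e ∈ Y <;> simp [h1, h2, h3, h4]

/-- Every tight set lies inside every minimum cut side: uncrossing otherwise yields a proper
subset with no more entering arcs. -/
lemma tight_subset {A : Finset E} {S : Set V} {t : V} {k l : ℕ} {T C : Set V}
    (hl : ∀ U, t ∈ U → Disjoint U S → l ≤ (entering tl hd A U).card)
    (hT : T ∈ tight tl hd A S t k) (htC : t ∈ C) (hCS : Disjoint C S)
    (hC : (entering tl hd A C).card = l) : T ⊆ C := by
  obtain ⟨htT, hTS, hk, hlate, -⟩ := hT
  by_contra hTC
  have h1 := hlate (T ∩ C)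
    ⟨Set.inter_subset_left, fun h => hTC fun x hx => (h hx).2⟩ ⟨htT, htC⟩
  have h2 := hl (T ∪ C) (Or.inl htT) (Set.disjoint_union_left.2 ⟨hTS, hCS⟩)
  have h3 := card_entering_submodular tl hd A T C
  omega

lemma entering_erase (A : Finset E) (e : E) (T : Set V) :
    entering tl hd (A.erase e) T = (entering tl hd A T).erase e := by
  ext f; simp [entering]; tauto

lemma card_entering_le_erase (A : Finset E) (e : E) (T : Set V) :
    (entering tl hd A T).card ≤ (entering tl hd (A.erase e) T).card + 1 := by
  rw [entering_erase]
  have := Finset.pred_card_le_card_erase (s := entering tl hd A T) (a := e)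
  omega

/-- The branch in which the chosen arc belongs to the cut: delete the arc. -/
lemma tight_erase {A : Finset E} {S : Set V} {t : V} {k : ℕ} {T : Set V} {e : E}
    (hT : T ∈ tight tl hd A S t (k + 1)) (he : e ∈ entering tl hd A T) :
    T ∈ tight tl hd (A.erase e) S t k := by
  obtain ⟨htT, hTS, hk, hlate, hmin⟩ := hT
  refine ⟨htT, hTS, ?_, fun T' h1 h2 => ?_, fun U h1 h2 h3 => ?_⟩
  · rw [entering_erase, Finset.card_erase_of_mem he, hk]; rfl
  · have := hlate T' h1 h2
    have := card_entering_le_erase tl hd A e T'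
    omega
  · rw [entering_erase, entering_erase] at *
    rw [hmin U h1 h2]
    intro f hf
    by_cases hfe : f = e
    · exact hfe ▸ he
    · exact Finset.mem_of_mem_erase (h3 (Finset.mem_erase.2 ⟨hfe, hf⟩))

/-- The branch in which the chosen arc is not in the cut: its head becomes a source. -/
lemma tight_insert {A : Finset E} {S : Set V} {t : V} {k : ℕ} {T : Set V} {v : V}
    (hT : T ∈ tight tl hd A S t k) (hv : v ∉ T) :
    T ∈ tight tl hd A (insert v S) t k := by
  obtain ⟨htT, hTS, hk, hlate, hmin⟩ := hT
  refine ⟨htT, Set.disjoint_insert_right.2 ⟨hv, hTS⟩, hk, hlate, fun U h1 h2 h3 => ?_⟩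
  exact hmin U h1 (Set.disjoint_insert_right.1 h2).2 h3

/-! ### The branching bound -/

/-- If cuts of size `l + 1` exist, branch on an arc `e` entering an inclusion-minimal such side:
each tight set is entered by `e` or avoids `hd e`, and making `hd e` a source raises the minimum
cut size. -/
lemma exists_branch [Finite V] {A : Finset E} {S : Set V} {t : V} {l : ℕ}
    (hl : ∀ U, t ∈ U → Disjoint U S → l + 1 ≤ (entering tl hd A U).card) :
    (∀ U, t ∈ U → Disjoint U S → l + 2 ≤ (entering tl hd A U).card) ∨
    ∃ C e, t ∈ C ∧ Disjoint C S ∧ (entering tl hd A C).card = l + 1 ∧ e ∈ entering tl hd A C ∧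
      (∀ U, t ∈ U → Disjoint U (insert (hd e) S) → l + 2 ≤ (entering tl hd A U).card) ∧
      ∀ k, ∀ T ∈ tight tl hd A S t k,
        e ∈ entering tl hd A T ∨ T ∈ tight tl hd A (insert (hd e) S) t k := by
  by_cases hex : ∃ C, t ∈ C ∧ Disjoint C S ∧ (entering tl hd A C).card = l + 1
  · right
    obtain ⟨C, ⟨htC, hCS, hC⟩, hCmin⟩ := Set.Finite.exists_minimal
      (Set.toFinite {C | t ∈ C ∧ Disjoint C S ∧ (entering tl hd A C).card = l + 1}) hex
    obtain ⟨e, he⟩ : (entering tl hd A C).Nonempty := Finset.card_pos.1 (by omega)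
    have he' := he
    simp only [entering, Finset.mem_filter] at he'
    refine ⟨C, e, htC, hCS, hC, he, fun U htU hUS => ?_, fun k T hT => ?_⟩
    · obtain ⟨heU, hUS⟩ := Set.disjoint_insert_right.1 hUS
      have h1 := hl U htU hUS
      by_contra hlt
      have h2 := hl (U ∪ C) (Or.inl htU) (Set.disjoint_union_left.2 ⟨hUS, hCS⟩)
      have h3 := hl (U ∩ C) ⟨htU, htC⟩ (hCS.mono_left Set.inter_subset_right)
      have h4 := card_entering_submodular tl hd A U C
      have h5 := hCmin (y := U ∩ C)
        ⟨⟨htU, htC⟩, hCS.mono_left Set.inter_subset_right, by omega⟩ Set.inter_subset_right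
      exact heU (h5 he'.2.2).1
    · have hTC : T ⊆ C := tight_subset tl hd hl hT htC hCS hC
      by_cases heT : hd e ∈ T
      · left
        simp only [entering, Finset.mem_filter]
        exact ⟨he'.1, fun h => he'.2.1 (hTC h), heT⟩
      · exact Or.inr (tight_insert tl hd hT heT)
  · left
    intro U htU hUS
    have h1 := hl U htU hUS
    have h2 : (entering tl hd A U).card ≠ l + 1 := fun h => hex ⟨U, htU, hUS, h⟩
    omega

lemma ncard_tight_le [Finite V] (t : V) (d : ℕ) : ∀ (l : ℕ) (A : Finset E) (S : Set V),
    (∀ U, t ∈ U → Disjoint U S → l + 1 ≤ (entering tl hd A U).card) →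
    (tight tl hd A S t (d + l + 1)).ncard ≤ ballot d (l + 1) := by
  induction d with
  | zero =>
    intro l A S hl
    rw [ballot_zero, Set.ncard_le_one (Set.toFinite _)]
    have key : ∀ T ∈ tight tl hd A S t (0 + l + 1), ∀ T' ∈ tight tl hd A S t (0 + l + 1),
        T ⊆ T' := fun T hT T' hT' =>
      tight_subset tl hd hl hT hT'.1 hT'.2.1 (by rw [hT'.2.2.1]; omega)
    exact fun T hT T' hT' => (key T hT T' hT').antisymm (key T' hT' T hT)
  | succ d ihd =>
    intro l
    induction l with
    | zero =>
      intro A S hl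
      rw [ballot_succ_succ, ballot_succ_zero, Nat.zero_add]
      rcases exists_branch tl hd hl with h | ⟨C, e, htC, hCS, hC, he, h, hT⟩
      · exact ihd 1 A S h
      · refine le_trans (Set.ncard_le_ncard (fun T hTm => ?_) (Set.toFinite _))
          (ihd 1 A _ h)
        refine (hT _ T hTm).resolve_left fun heT => ?_
        -- `δ(C)` is the single arc `e`, so `δ(C) ⊊ δ(T)`, against minimality of the cut `δ(T)`.
        have hsub : entering tl hd A C ⊆ entering tl hd A T := by
          obtain ⟨f, hf⟩ := Finset.card_eq_one.1 hC
          rw [hf, Finset.mem_singleton] at he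
          rw [hf, ← he]
          exact Finset.singleton_subset_iff.2 heT
        have h1 := hTm.2.2.2.2 C htC hCS hsub
        have h2 := hTm.2.2.1
        rw [← h1, hC] at h2
        omega
    | succ l ihl =>
      intro A S hl
      rw [ballot_succ_succ]
      rcases exists_branch tl hd hl with h | ⟨C, e, -, -, -, -, h, hT⟩
      · have h1 := ihd (l + 2) A S h
        rw [show d + (l + 2) + 1 = d + 1 + (l + 1) + 1 by ring] at h1
        exact h1.trans (Nat.le_add_left _ _)
      · have h1 := ihd (l + 2) A _ h
        rw [show d + (l + 2) + 1 = d + 1 + (l + 1) + 1 by ring] at h1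
        have h2 := ihl (A.erase e) S fun U h3 h4 => by
          have := hl U h3 h4
          have := card_entering_le_erase tl hd A e U
          omega
        refine le_trans (Set.ncard_le_ncard (t := tight tl hd (A.erase e) S t (d + 1 + l + 1) ∪
          tight tl hd A (insert (hd e) S) t (d + 1 + (l + 1) + 1)) (fun T hTm => ?_)
          (Set.toFinite _)) ((Set.ncard_union_le _ _).trans (Nat.add_le_add h2 h1))
        rcases hT _ T hTm with h5 | h5
        · exact Or.inl (tight_erase tl hd hTm h5)
        · exact Or.inr h5

/-! ### Latest minimal cuts and their target sides -/

/-- A walk into `U` from outside uses an arc entering `U`. -/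
lemma Walk.exists_entering {x t : V} {p : List E} (h : Walk tl hd x t p) {U : Set V} (ht : t ∈ U)
    (hx : x ∉ U) : ∃ e ∈ p, tl e ∉ U ∧ hd e ∈ U := by
  induction h with
  | nil => exact absurd ht hx
  | @cons e v p _ ih =>
    by_cases he : hd e ∈ U
    · exact ⟨e, by simp, hx, he⟩
    · obtain ⟨f, hf, h⟩ := ih ht he
      exact ⟨f, List.mem_cons_of_mem _ hf, h⟩

lemma mem_targetSide_self (t : V) (M : Set E) : t ∈ targetSide tl hd Set.univ t M :=
  ⟨[], ⟨Walk.nil t, by simp⟩, by simp⟩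

lemma not_mem_targetSide {s t : V} {M : Set E} (hM : IsCutIn tl hd Set.univ s t M) :
    s ∉ targetSide tl hd Set.univ t M := by
  rintro ⟨p, hp, havoid⟩
  obtain ⟨e, he, heM⟩ := hM p hp
  exact havoid e he heM

variable [Fintype E]

lemma isCutIn_entering {s t : V} {U : Set V} (ht : t ∈ U) (hs : s ∉ U) :
    IsCutIn tl hd Set.univ s t (entering tl hd Finset.univ U : Set E) := by
  intro p hp
  obtain ⟨e, he, h⟩ := hp.1.exists_entering tl hd ht hs
  exact ⟨e, he, by simpa [entering] using h⟩

lemma targetSide_entering_subset {t : V} {U : Set V} (ht : t ∈ U) :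
    targetSide tl hd Set.univ t (entering tl hd Finset.univ U : Set E) ⊆ U := by
  rintro x ⟨p, hp, havoid⟩
  by_contra hx
  obtain ⟨e, he, h⟩ := hp.1.exists_entering tl hd ht hx
  exact havoid e he (by simpa [entering] using h)

lemma entering_targetSide {s t : V} {M : Set E} (hM : IsMinimalCutIn tl hd Set.univ s t M) :
    (entering tl hd Finset.univ (targetSide tl hd Set.univ t M) : Set E) = M := by
  have hcut := isCutIn_entering tl hd (mem_targetSide_self tl hd t M)
    (not_mem_targetSide tl hd hM.1)
  have hsub : (entering tl hd Finset.univ (targetSide tl hd Set.univ t M) : Set E) ⊆ M := by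
    intro e he
    simp only [entering, Finset.coe_filter, Finset.mem_univ, true_and, Set.mem_ofPred_eq] at he
    by_contra heM
    obtain ⟨htl, p, hp, havoid⟩ := he
    refine htl ⟨e :: p, ⟨Walk.cons e hp.1, by simp⟩, ?_⟩
    simpa [heM] using havoid
  by_contra hne
  exact hM.2 _ (hsub.ssubset_of_ne hne) hcut

lemma targetSide_mem_tight {s t : V} {M : Set E} {k : ℕ}
    (hlate : IsLatestIn tl hd Set.univ s t M) (hM : IsMinimalCutIn tl hd Set.univ s t M)
    (hk : M.ncard = k) :
    targetSide tl hd Set.univ t M ∈ tight tl hd Finset.univ {s} t k := by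
  have heq := entering_targetSide tl hd hM
  have hs := not_mem_targetSide tl hd hM.1
  refine ⟨mem_targetSide_self tl hd t M, Set.disjoint_singleton_right.2 hs, ?_,
    fun T' hT' ht => ?_, fun U ht hU hsub => ?_⟩
  · rw [← Set.ncard_coe_finset, heq, hk]
  · by_contra hle
    have hsub := targetSide_entering_subset tl hd ht
    refine hlate.2 ⟨_, isCutIn_entering tl hd ht fun h => hs (hT'.1 h),
      ⟨hsub.trans hT'.1, fun h => hT'.2 (h ▸ hsub)⟩, ?_⟩
    rw [Set.ncard_coe_finset, hk]
    omega
  · by_contra hne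
    refine hM.2 _ ?_ (isCutIn_entering tl hd ht (Set.disjoint_singleton_right.1 hU))
    rw [← heq]
    exact Finset.coe_ssubset.2 (hsub.ssubset_of_ne hne)

lemma ncard_latest_eq_le [Finite V] (s t : V) (d : ℕ) :
    {M : Set E | IsLatestIn tl hd Set.univ s t M ∧
        IsMinimalCutIn tl hd Set.univ s t M ∧ M.ncard = d + 1}.ncard ≤ catalan d := by
  rw [← ballot_one]
  have h1 : {M : Set E | IsLatestIn tl hd Set.univ s t M ∧
      IsMinimalCutIn tl hd Set.univ s t M ∧ M.ncard = d + 1}.ncard ≤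
      (tight tl hd Finset.univ {s} t (d + 1)).ncard := by
    refine Set.ncard_le_ncard_of_injOn (targetSide tl hd Set.univ t)
      (fun M hM => targetSide_mem_tight tl hd hM.1 hM.2.1 hM.2.2) ?_ (Set.toFinite _)
    intro M hM M' hM' h
    rw [← entering_targetSide tl hd hM.2.1, ← entering_targetSide tl hd hM'.2.1]
    exact congrArg (fun T => (entering tl hd Finset.univ T : Set E)) h
  rcases Set.eq_empty_or_nonempty (tight tl hd Finset.univ {s} t (d + 1)) with h0 | ⟨T, hT⟩
  · rw [h0, Set.ncard_empty] at h1
    omega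
  · refine h1.trans (ncard_tight_le tl hd t d 0 Finset.univ {s} fun U ht hU => ?_)
    -- An empty cut would be a proper subset of the minimal cut `δ(T)` of positive size.
    rw [Nat.zero_add, Nat.one_le_iff_ne_zero]
    intro h
    have h2 := hT.2.2.2.2 U ht hU (by rw [Finset.card_eq_zero.1 h]; exact Finset.empty_subset _)
    have h3 := hT.2.2.1
    rw [← h2] at h3
    omega

end Cuts

end APMC

open APMC

/-- The number of `s`-`t`-latest `s`-`t` `k`-cuts is at most the Catalan number
`C_{k-1}`, and the number of `s`-`t`-latest `s`-`t` `≤k`-cuts is at most `4^k`. -/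
theorem card_latest_cuts_le {V E : Type} [Fintype V] [Fintype E]
    (tl hd : E → V) (s t : V) (hst : s ≠ t) (k : ℕ) (hk : 1 ≤ k) :
    {M : Set E | IsLatestIn tl hd Set.univ s t M ∧
        IsMinimalCutIn tl hd Set.univ s t M ∧ M.ncard = k}.ncard ≤ catalan (k - 1) ∧
    {M : Set E | IsLatestIn tl hd Set.univ s t M ∧
        IsMinimalCutIn tl hd Set.univ s t M ∧ M.ncard ≤ k}.ncard ≤ 4 ^ k := by
  constructor
  · obtain ⟨d, rfl⟩ := Nat.exists_eq_add_of_le' hk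
    exact ncard_latest_eq_le tl hd s t d
  · clear hk
    induction k with
    | zero =>
      rw [pow_zero, Set.ncard_le_one (Set.toFinite _)]
      rintro M ⟨-, -, hM⟩ M' ⟨-, -, hM'⟩
      rw [Nat.le_zero, Set.ncard_eq_zero (Set.toFinite _)] at hM hM'
      rw [hM, hM']
    | succ k ih =>
      have h1 := (ncard_latest_eq_le tl hd s t k).trans (catalan_le_four_pow k)
      refine le_trans (Set.ncard_le_ncard (t :=
        {M : Set E | IsLatestIn tl hd Set.univ s t M ∧
          IsMinimalCutIn tl hd Set.univ s t M ∧ M.ncard ≤ k} ∪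
        {M : Set E | IsLatestIn tl hd Set.univ s t M ∧
          IsMinimalCutIn tl hd Set.univ s t M ∧ M.ncard = k + 1}) ?_ (Set.toFinite _))
        ((Set.ncard_union_le _ _).trans ((Nat.add_le_add ih h1).trans ?_))
      · rintro M ⟨h2, h3, h4⟩
        rcases Nat.le_succ_iff.1 h4 with h | h
        · exact Or.inl ⟨h2, h3, h⟩
        · exact Or.inr ⟨h2, h3, h⟩
      · rw [pow_succ]
        omega
end

section
/- For every k ≥ 1 there exist a directed multigraph G and distinct vertices s, t such that the number of s-t-latest s-t k-cuts is exactly the Catalan number C_{k-1} = (1/k)·binom(2k-2, k-1); i.e., the Catalan bound on the number of s-t-latest k-cuts is tight. -/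
namespace APMC

open BinaryTree

/-! ### Target sides in general multigraphs -/

theorem mem_targetSide_iff {V E : Type} {tl hd : E → V} {t x : V} {M : Set E} :
    x ∈ targetSide tl hd Set.univ t M ↔
      x = t ∨ ∃ e, tl e = x ∧ e ∉ M ∧ hd e ∈ targetSide tl hd Set.univ t M := by
  constructor
  · rintro ⟨p, ⟨hw, -⟩, hp⟩
    cases hw with
    | nil => exact Or.inl rfl
    | cons e hw =>
      exact Or.inr ⟨e, rfl, hp e (by simp), _, ⟨hw, by simp⟩,
        fun f hf => hp f (List.mem_cons_of_mem _ hf)⟩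
  · rintro (rfl | ⟨e, rfl, he, p, ⟨hw, -⟩, hp⟩)
    · exact ⟨[], ⟨Walk.nil _, by simp⟩, by simp⟩
    · refine ⟨e :: p, ⟨Walk.cons e hw, by simp⟩, ?_⟩
      intro f hf
      rcases List.mem_cons.1 hf with rfl | hf
      · exact he
      · exact hp f hf

theorem isCutIn_iff {V E : Type} {tl hd : E → V} {s t : V} {M : Set E} :
    IsCutIn tl hd Set.univ s t M ↔ s ∉ targetSide tl hd Set.univ t M := by
  constructor
  · rintro h ⟨p, hw, hp⟩
    obtain ⟨e, he, heM⟩ := h p hw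
    exact hp e he heM
  · intro h p hw
    by_contra! hc
    exact h ⟨p, hw, hc⟩

/-! ### Leaf positions of binary trees -/

/-- The positions of the leaves of `T` when its root sits at the position `w`.  A position is the
word of turns leading to it, the latest turn first: the children of `w` are `false :: w` and
`true :: w`. -/
def leafWords : BinaryTree Unit → List Bool → Finset (List Bool)
  | .nil, w => {w}
  | .node _ l r, w => leafWords l (false :: w) ∪ leafWords r (true :: w)

theorem suffix_of_mem_leafWords {T : BinaryTree Unit} {w a : List Bool}
    (h : a ∈ leafWords T w) : w <:+ a := by
  induction T generalizing w with
  | nil => simp [leafWords] at h; simp [h]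
  | node _ l r ihl ihr =>
    rcases Finset.mem_union.1 h with h | h
    · exact (List.suffix_cons _ _).trans (ihl h)
    · exact (List.suffix_cons _ _).trans (ihr h)

theorem length_le_of_mem_leafWords {T : BinaryTree Unit} {w a : List Bool}
    (h : a ∈ leafWords T w) : a.length ≤ w.length + T.numNodes := by
  induction T generalizing w with
  | nil => simp [leafWords] at h; simp [h]
  | node _ l r ihl ihr =>
    rcases Finset.mem_union.1 h with h | h
    · have := ihl h; simp [numNodes] at *; omega
    · have := ihr h; simp [numNodes] at *; omega

theorem leafWords_nonempty (T : BinaryTree Unit) (w : List Bool) : (leafWords T w).Nonempty := by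
  induction T generalizing w with
  | nil => simp [leafWords]
  | node _ l r ihl ihr => exact (ihl _).mono Finset.subset_union_left

theorem notMem_leafWords_of_ne {l r : BinaryTree Unit} {w a : List Bool} {b c : Bool}
    (hbc : b ≠ c) (h : a ∈ leafWords l (b :: w)) : a ∉ leafWords r (c :: w) := by
  intro h'
  have h1 := suffix_of_mem_leafWords h
  have h2 := suffix_of_mem_leafWords h'
  have h3 := List.suffix_of_suffix_length_le h1 h2 (by simp)
  exact hbc (List.cons.inj (h3.eq_of_length (by simp))).1

theorem notMem_leafWords_cons (T : BinaryTree Unit) (w : List Bool) (b : Bool) :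
    w ∉ leafWords T (b :: w) := by
  intro h
  have := (suffix_of_mem_leafWords h).length_le
  simp at this

theorem card_leafWords (T : BinaryTree Unit) (w : List Bool) :
    (leafWords T w).card = T.numNodes + 1 := by
  induction T generalizing w with
  | nil => simp [leafWords, numNodes]
  | node _ l r ihl ihr =>
    rw [leafWords, Finset.card_union_of_disjoint, ihl, ihr, numNodes]
    · omega
    · exact Finset.disjoint_left.2 fun a h => notMem_leafWords_of_ne (by simp) h

theorem eq_of_leafWords_subset {T' T : BinaryTree Unit} {w : List Bool}
    (h : leafWords T' w ⊆ leafWords T w) : T' = T := by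
  induction T generalizing T' w with
  | nil =>
    cases T' with
    | nil => rfl
    | node _ l' r' =>
      obtain ⟨a, ha⟩ := leafWords_nonempty l' (false :: w)
      have := h (Finset.mem_union_left _ ha)
      simp only [leafWords, Finset.mem_singleton] at this
      subst this
      exact absurd ha (notMem_leafWords_cons _ _ _)
  | node _ l r ihl ihr =>
    cases T' with
    | nil =>
      have := h (Finset.mem_singleton_self w)
      rcases Finset.mem_union.1 this with h | h <;>
        exact absurd h (notMem_leafWords_cons _ _ _)
    | node _ l' r' =>
      have hl : l' = l := ihl fun a ha =>
        (Finset.mem_union.1 (h (Finset.mem_union_left _ ha))).resolve_right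
          (notMem_leafWords_of_ne (by simp) ha)
      have hr : r' = r := ihr fun a ha =>
        (Finset.mem_union.1 (h (Finset.mem_union_right _ ha))).resolve_left
          (notMem_leafWords_of_ne (by simp) ha)
      rw [hl, hr]

/-- The set of positions `A` contains all leaf positions of some binary tree rooted at `w`. -/
def Covers (A : Set (List Bool)) (w : List Bool) : Prop :=
  ∃ T, ∀ a ∈ leafWords T w, a ∈ A

theorem Covers.node {A : Set (List Bool)} {w : List Bool} (h : ∀ b, Covers A (b :: w)) :
    Covers A w := by
  obtain ⟨l, hl⟩ := h false
  obtain ⟨r, hr⟩ := h true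
  exact ⟨.node () l r, fun a ha => (Finset.mem_union.1 ha).elim (hl a) (hr a)⟩

/-- A leaf of `T` is the root of `T` or a child of an internal node, and both children of an
internal node are covered by the leaves of `T`. -/
theorem eq_or_covers_of_mem_leafWords {T : BinaryTree Unit} {w a : List Bool}
    {A : Set (List Bool)} (hA : ∀ x ∈ leafWords T w, x ∈ A) (h : a ∈ leafWords T w) :
    a = w ∨ ∃ b u, a = b :: u ∧ ∀ c, Covers A (c :: u) := by
  induction T generalizing w with
  | nil => exact Or.inl (by simpa [leafWords] using h)
  | node _ l r ihl ihr =>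
    have hl : ∀ x ∈ leafWords l (false :: w), x ∈ A := fun x hx => hA x (Finset.mem_union_left _ hx)
    have hr : ∀ x ∈ leafWords r (true :: w), x ∈ A := fun x hx => hA x (Finset.mem_union_right _ hx)
    have hc : ∀ c, Covers A (c :: w) := by
      rintro (_ | _)
      · exact ⟨l, hl⟩
      · exact ⟨r, hr⟩
    right
    rcases Finset.mem_union.1 h with h | h
    · rcases ihl hl h with rfl | h
      · exact ⟨_, _, rfl, hc⟩
      · exact h
    · rcases ihr hr h with rfl | h
      · exact ⟨_, _, rfl, hc⟩
      · exact h

/-- If `A` covers every leaf of `T`, grafting the covering trees onto `T` gives a tree `T'` whose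
leaves lie in `A`; it has more nodes than `T` unless nothing was grafted. -/
theorem exists_refinement {T : BinaryTree Unit} {w : List Bool} {A : Set (List Bool)}
    (h : ∀ a ∈ leafWords T w, Covers A a) :
    ∃ T', (∀ a ∈ leafWords T' w, a ∈ A) ∧ T.numNodes ≤ T'.numNodes ∧
      (T'.numNodes ≤ T.numNodes → T' = T) := by
  induction T generalizing w with
  | nil =>
    obtain ⟨T', hT'⟩ := h w (Finset.mem_singleton_self w)
    refine ⟨T', hT', Nat.zero_le _, fun h0 => ?_⟩
    cases T' with
    | nil => rfl
    | node => simp [numNodes] at h0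
  | node _ l r ihl ihr =>
    obtain ⟨l', hl, hl1, hl2⟩ := ihl fun a ha => h a (Finset.mem_union_left _ ha)
    obtain ⟨r', hr, hr1, hr2⟩ := ihr fun a ha => h a (Finset.mem_union_right _ ha)
    refine ⟨.node () l' r', fun a ha => (Finset.mem_union.1 ha).elim (hl a) (hr a), ?_, ?_⟩
    · simp only [numNodes]; omega
    · intro h0
      simp only [numNodes] at h0
      rw [hl2 (by omega), hr2 (by omega)]

/-! ### The tree graph and its cuts -/

/-- Arcs of the tree graph of depth `D`: the word names the tree position the arc enters. -/
abbrev Arc (D : ℕ) : Type := {w : List Bool // w.length ≤ D}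

/-- Vertices of the tree graph of depth `D`: `none` is the source, `some none` the sink, and
`some (some w)` the tree position `w`.  The positions of length `D` are isolated vertices, since
the arcs into them are redirected to the sink. -/
abbrev Vtx (D : ℕ) : Type := Option (Option (Arc D))

/-- The tail of an arc: the parent of the position it enters, or the source for the root. -/
def arcTail {D : ℕ} : Arc D → Vtx D
  | ⟨[], _⟩ => none
  | ⟨_ :: u, h⟩ => some (some ⟨u, Nat.le_of_succ_le h⟩)

/-- The head of an arc: the position naming it, with the leaves identified with the sink. -/
def arcHead {D : ℕ} (e : Arc D) : Vtx D :=
  if e.1.length = D then some none else some (some e)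

/-- The target side of `M` in the tree graph of depth `D`. -/
abbrev side {D : ℕ} (M : Set (Arc D)) : Set (Vtx D) :=
  targetSide arcTail arcHead Set.univ (some none) M

theorem node_notMem_side_iff {D : ℕ} {M : Set (Arc D)} {u : List Bool} (hu : u.length + 1 ≤ D) :
    some (some ⟨u, Nat.le_of_succ_le hu⟩) ∉ side M ↔
      ∀ b, (⟨b :: u, hu⟩ : Arc D) ∈ M ∨ arcHead (⟨b :: u, hu⟩ : Arc D) ∉ side M := by
  rw [side, mem_targetSide_iff]
  constructor
  · intro h b
    by_contra! hc
    exact h (Or.inr ⟨⟨b :: u, hu⟩, rfl, hc.1, hc.2⟩)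
  · rintro h (h' | ⟨⟨w, hw⟩, h1, h2, h3⟩)
    · simp at h'
    · cases w with
      | nil => simp [arcTail] at h1
      | cons b v =>
        simp only [arcTail, Option.some.injEq, Subtype.mk.injEq] at h1
        subst h1
        exact (h b).elim h2 (fun h4 => h4 h3)

/-- Everything passing through the arc `e` is intercepted by `M` iff `M` contains the leaves of
some binary tree rooted at `e`. -/
theorem blocked_iff_covers {D : ℕ} {M : Set (Arc D)} (e : Arc D) :
    (e ∈ M ∨ arcHead e ∉ side M) ↔ Covers (Subtype.val '' M) e.1 := by
  constructor
  · obtain ⟨n, hn⟩ : ∃ n, n = D - e.1.length := ⟨_, rfl⟩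
    induction n generalizing e with
    | zero =>
      rintro (h | h)
      · exact ⟨.nil, by simpa [leafWords] using ⟨e.2, h⟩⟩
      · have : e.1.length = D := by have := e.2; omega
        rw [arcHead, if_pos this] at h
        exact absurd (mem_targetSide_iff.2 (Or.inl rfl)) h
    | succ n ih =>
      rintro (h | h)
      · exact ⟨.nil, by simpa [leafWords] using ⟨e.2, h⟩⟩
      · have hlt : e.1.length + 1 ≤ D := by omega
        rw [arcHead, if_neg (by omega)] at h
        have := (node_notMem_side_iff hlt).1 h
        exact Covers.node fun b => ih ⟨b :: e.1, hlt⟩ (by simp; omega) (this b)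
  · rintro ⟨T, hT⟩
    induction T generalizing e with
    | nil =>
      left
      obtain ⟨x, hx, hxe⟩ := hT e.1 (Finset.mem_singleton_self _)
      rwa [← Subtype.ext hxe]
    | node _ l r ihl ihr =>
      right
      have hl : ∀ x ∈ leafWords l (false :: e.1), x ∈ Subtype.val '' M :=
        fun x hx => hT x (Finset.mem_union_left _ hx)
      have hr : ∀ x ∈ leafWords r (true :: e.1), x ∈ Subtype.val '' M :=
        fun x hx => hT x (Finset.mem_union_right _ hx)
      have hlt : e.1.length + 1 ≤ D := by
        obtain ⟨a, ha⟩ := leafWords_nonempty l (false :: e.1)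
        obtain ⟨x, -, rfl⟩ := hl a ha
        have := (suffix_of_mem_leafWords ha).length_le
        simp only [List.length_cons] at this
        exact this.trans x.2
      rw [arcHead, if_neg (by omega)]
      refine (node_notMem_side_iff hlt).2 ?_
      rintro (_ | _)
      · exact ihl ⟨false :: e.1, hlt⟩ hl
      · exact ihr ⟨true :: e.1, hlt⟩ hr

theorem isCutIn_iff_covers {D : ℕ} {M : Set (Arc D)} :
    IsCutIn arcTail arcHead Set.univ none (some none) M ↔ Covers (Subtype.val '' M) [] := by
  rw [isCutIn_iff, ← blocked_iff_covers ⟨[], Nat.zero_le _⟩, mem_targetSide_iff]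
  constructor
  · intro h
    by_contra! hc
    exact h (Or.inr ⟨_, rfl, hc.1, hc.2⟩)
  · rintro h (h' | ⟨⟨w, hw⟩, h1, h2, h3⟩)
    · simp at h'
    · cases w with
      | nil => exact h.elim h2 (fun h4 => h4 h3)
      | cons b v => simp [arcTail] at h1

/-- The arcs entering the leaves of `T`, placed at the root of the tree graph. -/
def treeCut (D : ℕ) (T : BinaryTree Unit) : Set (Arc D) := {e | e.1 ∈ leafWords T []}

theorem image_treeCut {D : ℕ} {T : BinaryTree Unit} (hT : ∀ a ∈ leafWords T [], a.length ≤ D) :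
    Subtype.val '' treeCut D T = (leafWords T [] : Set (List Bool)) := by
  ext a
  constructor
  · rintro ⟨e, he, rfl⟩
    exact he
  · intro ha
    exact ⟨⟨a, hT a ha⟩, ha, rfl⟩

theorem ncard_treeCut {D : ℕ} {T : BinaryTree Unit} (hT : ∀ a ∈ leafWords T [], a.length ≤ D) :
    (treeCut D T).ncard = T.numNodes + 1 := by
  rw [← Set.ncard_image_of_injective _ Subtype.val_injective, image_treeCut hT,
    Set.ncard_coe_finset, card_leafWords]

theorem isCutIn_treeCut {D : ℕ} {T : BinaryTree Unit}
    (hT : ∀ a ∈ leafWords T [], a.length ≤ D) :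
    IsCutIn arcTail arcHead Set.univ none (some none) (treeCut D T) := by
  rw [isCutIn_iff_covers, image_treeCut hT]
  exact ⟨T, fun a ha => ha⟩

theorem treeCut_subset {D : ℕ} {T : BinaryTree Unit} {M : Set (Arc D)}
    (h : ∀ a ∈ leafWords T [], a ∈ Subtype.val '' M) : treeCut D T ⊆ M := by
  intro e he
  obtain ⟨x, hx, hxe⟩ := h e.1 he
  rwa [← Subtype.ext hxe]

theorem isMinimalCutIn_treeCut {D : ℕ} {T : BinaryTree Unit}
    (hT : ∀ a ∈ leafWords T [], a.length ≤ D) :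
    IsMinimalCutIn arcTail arcHead Set.univ none (some none) (treeCut D T) := by
  refine ⟨isCutIn_treeCut hT, fun M' hM' hcut => ?_⟩
  obtain ⟨T', hT'⟩ := isCutIn_iff_covers.1 hcut
  have : T' = T := eq_of_leafWords_subset fun a ha => by
    obtain ⟨x, hx, rfl⟩ := hT' a ha
    exact hM'.1 hx
  subst this
  exact hM'.2 (treeCut_subset hT')

theorem isLatestIn_treeCut {D : ℕ} {T : BinaryTree Unit}
    (hT : ∀ a ∈ leafWords T [], a.length ≤ D) :
    IsLatestIn arcTail arcHead Set.univ none (some none) (treeCut D T) := by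
  have : Finite (Arc D) := List.finite_length_le Bool D
  refine ⟨isCutIn_treeCut hT, ?_⟩
  rintro ⟨M', hcut, ⟨hsub, hne⟩, hcard⟩
  -- The tail of an arc of `treeCut D T` lies outside its target side, hence outside that of `M'`.
  have hcov : ∀ a ∈ leafWords T [], Covers (Subtype.val '' M') a := by
    intro a ha
    rcases eq_or_covers_of_mem_leafWords (A := Subtype.val '' treeCut D T)
      (by rw [image_treeCut hT]; exact fun x hx => hx) ha with rfl | ⟨b, u, rfl, hc⟩
    · exact isCutIn_iff_covers.1 hcut
    · have hu : u.length + 1 ≤ D := hT _ ha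
      have hout := (node_notMem_side_iff hu).2 fun c =>
        (blocked_iff_covers ⟨c :: u, hu⟩).2 (hc c)
      exact (blocked_iff_covers ⟨b :: u, hu⟩).1
        ((node_notMem_side_iff hu).1 (fun h => hout (hsub h)) b)
  obtain ⟨T', hT', hle, heq⟩ := exists_refinement hcov
  have hT'D : ∀ a ∈ leafWords T' [], a.length ≤ D := by
    intro a ha
    obtain ⟨x, -, rfl⟩ := hT' a ha
    exact x.2
  have hsub' := treeCut_subset hT'
  have h1 := Set.ncard_le_ncard hsub'
  rw [ncard_treeCut hT'D] at h1
  rw [ncard_treeCut hT] at hcard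
  obtain rfl := heq (by omega)
  have : treeCut D T' = M' :=
    Set.eq_of_subset_of_ncard_le hsub' (by rw [ncard_treeCut hT]; exact hcard)
  exact hne (by rw [this])

end APMC

open APMC

/-- The Catalan bound on the number of `s`-`t`-latest `k`-cuts is tight: for every
`k ≥ 1` there is a directed multigraph with distinct vertices `s`, `t` having exactly
`C_{k-1}` many `s`-`t`-latest `s`-`t` `k`-cuts. -/
theorem catalan_bound_tight (k : ℕ) (hk : 1 ≤ k) :
    ∃ (V E : Type) (_ : Fintype V) (_ : Fintype E) (tl hd : E → V) (s t : V),
      s ≠ t ∧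
      {M : Set E | IsLatestIn tl hd Set.univ s t M ∧
          IsMinimalCutIn tl hd Set.univ s t M ∧ M.ncard = k}.ncard
        = catalan (k - 1) := by
  have hfin : Finite (Arc k) := List.finite_length_le Bool k
  have hlen : ∀ T : BinaryTree Unit, T.numNodes = k - 1 →
      ∀ a ∈ leafWords T [], a.length ≤ k := by
    intro T hT a ha
    have := length_le_of_mem_leafWords ha
    simp only [List.length_nil] at this
    omega
  refine ⟨Vtx k, Arc k, Fintype.ofFinite _, Fintype.ofFinite _, arcTail, arcHead,
    none, some none, by simp, ?_⟩
  have hset : {M : Set (Arc k) | IsLatestIn arcTail arcHead Set.univ none (some none) M ∧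
      IsMinimalCutIn arcTail arcHead Set.univ none (some none) M ∧ M.ncard = k} =
      treeCut k '' (BinaryTree.treesOfNumNodesEq (k - 1) : Set (BinaryTree Unit)) := by
    ext M
    constructor
    · rintro ⟨-, ⟨hcut, hmin⟩, hcard⟩
      obtain ⟨T, hT⟩ := isCutIn_iff_covers.1 hcut
      have hTk : ∀ a ∈ leafWords T [], a.length ≤ k := by
        intro a ha
        obtain ⟨x, -, rfl⟩ := hT a ha
        exact x.2
      have hM : treeCut k T = M := by
        by_contra hne
        exact hmin _ ((treeCut_subset hT).ssubset_of_ne hne) (isCutIn_treeCut hTk)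
      refine ⟨T, ?_, hM⟩
      rw [Finset.mem_coe, BinaryTree.mem_treesOfNumNodesEq]
      rw [← hM, ncard_treeCut hTk] at hcard
      omega
    · rintro ⟨T, hT, rfl⟩
      rw [Finset.mem_coe, BinaryTree.mem_treesOfNumNodesEq] at hT
      have h := hlen T hT
      refine ⟨isLatestIn_treeCut h, isMinimalCutIn_treeCut h, ?_⟩
      rw [ncard_treeCut h]
      omega
  have hinj : Set.InjOn (treeCut k)
      (BinaryTree.treesOfNumNodesEq (k - 1) : Set (BinaryTree Unit)) := by
    intro T hT T' hT' h
    rw [Finset.mem_coe, BinaryTree.mem_treesOfNumNodesEq] at hT hT'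
    have h' := congrArg (Subtype.val '' ·) h
    simp only [image_treeCut (hlen T hT), image_treeCut (hlen T' hT')] at h'
    exact eq_of_leafWords_subset (Finset.coe_injective h').subset
  rw [hset, hinj.ncard_image, Set.ncard_coe_finset,
    BinaryTree.treesOfNumNodesEq_card_eq_catalan]
end

section
/- Let G be a directed multigraph, let A₁, A₂ be an arc split of G, and let s, t be distinct vertices. Then every set M ⊆ E that is split-covering with respect to A₁, A₂ and s, t is an s-t cut in G. -/
open APMC

/-- In an arc split an arc of `A₂` is never followed by an arc of `A₁`, so every walk is a
walk in `(V, A₁)` followed by a walk in `(V, A₂)`. -/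
theorem walk_splits {V E : Type} {tl hd : E → V} {A₁ A₂ : Set E}
    (hsplit : ArcSplit tl hd A₁ A₂) {s t : V} {p : List E} (hp : Walk tl hd s t p) :
    ∃ v p₁ p₂, p = p₁ ++ p₂ ∧ WalkIn tl hd A₁ s v p₁ ∧ WalkIn tl hd A₂ v t p₂ := by
  obtain ⟨hcover, -, hno⟩ := hsplit
  induction hp with
  | nil v => exact ⟨v, [], [], rfl, ⟨.nil v, by simp⟩, ⟨.nil v, by simp⟩⟩
  | @cons e t p hp ih =>
    obtain ⟨v, p₁, p₂, rfl, ⟨hw₁, hA₁⟩, ⟨hw₂, hA₂⟩⟩ := ih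
    have he : e ∈ A₁ ∪ A₂ := hcover ▸ Set.mem_univ e
    rcases he with he | he
    · refine ⟨v, e :: p₁, p₂, rfl, ⟨.cons e hw₁, ?_⟩, hw₂, hA₂⟩
      rintro f (_ | ⟨_, hf⟩)
      exacts [he, hA₁ f hf]
    -- After `e ∈ A₂` the `A₁`-part is empty, so the whole walk lies in `A₂`.
    · generalize hu : hd e = u at hw₁
      cases hw₁ with
      | nil =>
        refine ⟨tl e, [], e :: p₂, rfl, ⟨.nil _, by simp⟩, .cons e (hu ▸ hw₂), ?_⟩
        rintro f (_ | ⟨_, hf⟩)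
        exacts [he, hA₂ f hf]
      | cons f _ => exact absurd hu (hno e he f (hA₁ f (by simp)))

/-- Every split-covering set with respect to an arc split `A₁, A₂` and vertices
`s`, `t` is an `s`-`t` cut. -/
theorem splitCovering_isCut {V E : Type} [Fintype V] [Fintype E]
    (tl hd : E → V) (A₁ A₂ : Set E) (hsplit : ArcSplit tl hd A₁ A₂)
    (s t : V) (hst : s ≠ t) (M : Set E)
    (hM : SplitCovering tl hd A₁ A₂ s t M) :
    IsCutIn tl hd Set.univ s t M := by
  rintro p ⟨hp, -⟩
  obtain ⟨v, p₁, p₂, rfl, h₁, h₂⟩ := walk_splits hsplit hp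
  obtain ⟨Mv, hMv, ⟨-, -, h | h⟩ | h | h⟩ := hM v
  · exact absurd ⟨p₁, h₁⟩ h
  · exact absurd ⟨p₂, h₂⟩ h
  · obtain ⟨e, he, heM⟩ := h.1 p₁ h₁
    exact ⟨e, List.mem_append_left _ he, hMv heM⟩
  · obtain ⟨e, he, heM⟩ := h.1 p₂ h₂
    exact ⟨e, List.mem_append_right _ he, hMv heM⟩
end

section
/- Let G be a directed multigraph with distinct vertices s, t, and let C ⊆ E be an s-t cut such that every s-t-latest cut M' satisfies M' ≥ C. Then every set M ⊆ E that is late-covering with respect to C is an s-t cut in G. -/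
open APMC

/-- Behind each of its arcs, a walk continues as a walk from the head of that arc. -/
theorem walk_suffix_of_mem {V E : Type} {tl hd : E → V} {x t : V} {p : List E}
    (h : Walk tl hd x t p) {e : E} (he : e ∈ p) :
    ∃ q, Walk tl hd (hd e) t q ∧ ∀ f ∈ q, f ∈ p := by
  induction h with
  | nil v => simp at he
  | @cons a v p' h ih =>
    rcases List.mem_cons.1 he with rfl | he
    · exact ⟨p', h, fun f hf => List.mem_cons_of_mem _ hf⟩
    · obtain ⟨q, hq, hsub⟩ := ih he
      exact ⟨q, hq, fun f hf => List.mem_cons_of_mem _ (hsub f hf)⟩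

/-- If `C` is an `s`-`t` cut such that every `s`-`t`-latest cut is later than `C`,
then every late-covering set with respect to `C` is an `s`-`t` cut. -/
theorem lateCovering_isCut {V E : Type} [Fintype V] [Fintype E]
    (tl hd : E → V) (s t : V) (hst : s ≠ t)
    (C : Set E) (hC : IsCutIn tl hd Set.univ s t C)
    (hCle : ∀ M' : Set E, IsLatestIn tl hd Set.univ s t M' →
      targetSide tl hd Set.univ t M' ⊆ targetSide tl hd Set.univ t C)
    (M : Set E) (hM : LateCovering tl hd t C M) :
    IsCutIn tl hd Set.univ s t M := by
  intro p hp
  obtain ⟨e, hep, heC⟩ := hC p hp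
  rcases hM e heC with heM | ⟨M', hM'M, hcut, -⟩
  · exact ⟨e, hep, heM⟩
  -- The rest of `p` behind `e` is a walk from `hd e` to `t`, so it meets the cut contained in `M`.
  · obtain ⟨q, hq, hqp⟩ := walk_suffix_of_mem hp.1 hep
    obtain ⟨f, hfq, hfM'⟩ := hcut q ⟨hq, fun _ _ => Set.mem_univ _⟩
    exact ⟨f, hqp f hfq, hM'M hfM'⟩
end

section
/- Let G be a directed multigraph with distinct vertices s, t, and let C₀ = {e ∈ E : tail(e) = s and there is a path from head(e) to t in G}. Then C₀ is an s-t cut and every s-t-latest cut M satisfies M ≥ C₀ (i.e., T_M ⊆ T_{C₀}). -/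
open APMC

/-- The suffix of a walk starting at one of its arcs is a walk from the tail of that arc. -/
theorem APMC.Walk.exists_suffix {V E : Type} {tl hd : E → V} {x t : V} {p : List E}
    (h : Walk tl hd x t p) {e : E} (he : e ∈ p) :
    ∃ q, q ⊆ p ∧ Walk tl hd (tl e) t q := by
  induction h with
  | nil v => simp at he
  | @cons a v p h ih =>
    rcases List.mem_cons.1 he with rfl | he
    · exact ⟨_, List.Subset.refl _, Walk.cons _ h⟩
    · obtain ⟨q, hq, hw⟩ := ih he
      exact ⟨q, List.subset_cons_of_subset _ hq, hw⟩

/-- The set `C₀` of all arcs leaving `s` whose head reaches `t` is an `s`-`t` cut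
and every `s`-`t`-latest cut `M` satisfies `M ≥ C₀`, i.e. `T_M ⊆ T_{C₀}`. -/
theorem canonical_earliest_cut {V E : Type} [Fintype V] [Fintype E]
    (tl hd : E → V) (s t : V) (hst : s ≠ t) :
    IsCutIn tl hd Set.univ s t
        {e : E | tl e = s ∧ Reaches tl hd Set.univ (hd e) t} ∧
      ∀ M : Set E, IsLatestIn tl hd Set.univ s t M →
        targetSide tl hd Set.univ t M ⊆
          targetSide tl hd Set.univ t
            {e : E | tl e = s ∧ Reaches tl hd Set.univ (hd e) t} := by
  constructor
  · rintro p ⟨hw, -⟩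
    cases hw with
    | nil => exact absurd rfl hst
    | cons e h => exact ⟨e, List.mem_cons_self, rfl, _, h, fun _ _ => Set.mem_univ _⟩
  · rintro M ⟨hcut, -⟩ x ⟨p, hp, hM⟩
    refine ⟨p, hp, ?_⟩
    rintro e he ⟨rfl, -⟩
    obtain ⟨q, hq, hw⟩ := hp.1.exists_suffix he
    obtain ⟨f, hf, hfM⟩ := hcut q ⟨hw, fun _ _ => Set.mem_univ _⟩
    exact hM f (hq hf) hfM
end

section
/- For any instance F₁,…,F_c of the Witness Superset problem, where each family Fᵢ contains at most K sets, each of size at most k, the number of solutions (sets W ⊆ U satisfying [cover], [size], and [minimal]) is at most K^k. -/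
/-!
The solutions are enumerated by a bounded search tree. Suppose a partial witness `S` is given and
the solutions `W ⊇ S` are to be counted. If `S` already satisfies [cover], minimality leaves only
`W = S`. Otherwise some family `F i` has no member inside `S`; every solution `W ⊇ S` contains
some `A ∈ F i`, hence contains `S ∪ A`, which is strictly larger than `S`. So there are at most `K`
branches, and each lowers the remaining budget `k - |S|` by at least one. The tree rooted
at `S = ∅` therefore has depth at most `k` and at most `K ^ k` leaves.
-/

/-- The search-tree bound: if at most `n` elements can still be added to the partial witness `S`,
then at most `K ^ n` of the solutions in `Sol` contain `S`. The hypothesis `hmin` is minimality in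
the form "a solution contains no covering set other than itself". -/
theorem card_solutions_containing_le {ι U : Type} [DecidableEq U]
    {K k : ℕ} (hK : 1 ≤ K) (F : ι → Finset (Finset U)) (hcard : ∀ i, (F i).card ≤ K)
    (Sol : Finset (Finset U))
    (hcov : ∀ W ∈ Sol, ∀ i, ∃ A ∈ F i, A ⊆ W)
    (hsize : ∀ W ∈ Sol, W.card ≤ k)
    (hmin : ∀ W ∈ Sol, ∀ S ⊆ W, (∀ i, ∃ A ∈ F i, A ⊆ S) → W = S)
    (n : ℕ) : ∀ S : Finset U, k ≤ S.card + n →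
      (Sol.filter (fun W => S ⊆ W)).card ≤ K ^ n := by
  induction n with
  | zero =>
    intro S hS
    rw [pow_zero, Finset.card_le_one_iff_subset_singleton]
    refine ⟨S, fun W hW => ?_⟩
    rw [Finset.mem_filter] at hW
    have := hsize W hW.1
    exact Finset.mem_singleton.2 (Finset.eq_of_subset_of_card_le hW.2 (by omega)).symm
  | succ n ih =>
    intro S hS
    by_cases hc : ∀ i, ∃ A ∈ F i, A ⊆ S
    · refine le_trans ?_ (Nat.one_le_pow _ _ hK)
      rw [Finset.card_le_one_iff_subset_singleton]
      refine ⟨S, fun W hW => ?_⟩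
      rw [Finset.mem_filter] at hW
      exact Finset.mem_singleton.2 (hmin W hW.1 S hW.2 hc)
    · push Not at hc
      obtain ⟨i, hi⟩ := hc
      have hsub : Sol.filter (fun W => S ⊆ W) ⊆
          (F i).biUnion (fun A => Sol.filter (fun W => S ∪ A ⊆ W)) := by
        intro W hW
        rw [Finset.mem_filter] at hW
        obtain ⟨A, hA, hAW⟩ := hcov W hW.1 i
        exact Finset.mem_biUnion.2
          ⟨A, hA, Finset.mem_filter.2 ⟨hW.1, Finset.union_subset hW.2 hAW⟩⟩
      have hbranch : ∀ A ∈ F i, (Sol.filter (fun W => S ∪ A ⊆ W)).card ≤ K ^ n := by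
        intro A hA
        apply ih
        have hlt : S.card < (S ∪ A).card := Finset.card_lt_card
          ⟨Finset.subset_union_left,
            fun h => hi A hA (Finset.subset_union_right.trans h)⟩
        omega
      calc _ ≤ _ := Finset.card_le_card hsub
        _ ≤ (F i).card * K ^ n := Finset.card_biUnion_le_card_mul _ _ _ hbranch
        _ ≤ K * K ^ n := Nat.mul_le_mul_right _ (hcard i)
        _ = K ^ (n + 1) := by ring

/-- For any instance of the Witness Superset problem with `c` families, each containing
at most `K` sets of size at most `k`, the number of solutions (sets `W` satisfying
[cover], [size] and [minimal]) is at most `K ^ k`. -/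
theorem witnessSuperset_card_solutions_le {U : Type} [Fintype U] [DecidableEq U]
    (c K k : ℕ) (hc : 1 ≤ c) (hK : 1 ≤ K) (hk : 1 ≤ k)
    (F : Fin c → Finset (Finset U))
    (hne : ∀ i, (F i).Nonempty)
    (hcard : ∀ i, (F i).card ≤ K)
    (hmem : ∀ i, ∀ A ∈ F i, A.card ≤ k) :
    {W : Finset U |
        (∀ i, ∃ A ∈ F i, A ⊆ W) ∧
        W.card ≤ k ∧
        ∀ W' : Finset U, W' ⊂ W → ¬ (∀ i, ∃ A ∈ F i, A ⊆ W')}.ncard ≤ K ^ k := by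
  classical
  rw [Set.ncard_eq_toFinset_card']
  refine le_trans (Finset.card_le_card ?_)
    (card_solutions_containing_le (k := k) hK F hcard
      (Set.toFinset {W : Finset U |
        (∀ i, ∃ A ∈ F i, A ⊆ W) ∧
        W.card ≤ k ∧
        ∀ W' : Finset U, W' ⊂ W → ¬ (∀ i, ∃ A ∈ F i, A ⊆ W')}) ?_ ?_ ?_ k ∅ (by simp))
  · intro W hW
    exact Finset.mem_filter.2 ⟨by simpa using hW, Finset.empty_subset W⟩
  · intro W hW
    exact (Set.mem_toFinset.1 hW).1
  · intro W hW
    exact (Set.mem_toFinset.1 hW).2.1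
  · intro W hW S hS hc
    by_contra hne'
    exact (Set.mem_toFinset.1 hW).2.2 S (hS.ssubset_of_ne (Ne.symm hne')) hc
end

section
/- Let C_slow : Fin u → Set (Fin q₁) be a d-superimposed binary code and let C₁ : Fin u → Set (Fin q₂) be a 1-superimposed binary code. Then the code C_fast : Fin u → Set (Fin q₁ × Fin q₂) defined by C_fast(x) = C_slow(x) × C₁(x) is d-superimposed. -/
/-- The encoding of a set `X` by a binary code `C` (with symbol set `Q`):
the union of the codewords of the elements of `X`. -/
def codeUnion {u : ℕ} {Q : Type} (C : Fin u → Set Q) (X : Set (Fin u)) : Set Q :=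
  ⋃ x ∈ X, C x

/-- A binary code is `d`-superimposed if the union of at most `d` codewords never
covers the codeword of an element outside the set. -/
def Superimposed {u : ℕ} {Q : Type} (d : ℕ) (C : Fin u → Set Q) : Prop :=
  ∀ X : Set (Fin u), X.ncard ≤ d → ∀ y ∉ X, ¬ C y ⊆ codeUnion C X

/-- The product of a `d`-superimposed code `C_slow` of length `q₁` with a
`1`-superimposed code `C₁` of length `q₂`, given by
`C_fast x = C_slow x ×ˢ C₁ x ⊆ Fin q₁ × Fin q₂`, is `d`-superimposed. -/
theorem product_superimposed {u q₁ q₂ : ℕ} (d : ℕ)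
    (Cslow : Fin u → Set (Fin q₁)) (C₁ : Fin u → Set (Fin q₂))
    (hslow : Superimposed d Cslow) (h1 : Superimposed 1 C₁) :
    Superimposed d (fun x => Cslow x ×ˢ C₁ x) := by
  intro X hX y hy hsub
  obtain ⟨a, hay, haX⟩ := Set.not_subset.mp (hslow X hX y hy)
  -- The case `X = ∅` of `1`-superimposition says that `C₁ y` is nonempty;
  -- any symbol of it completes `a` to an uncovered pair.
  obtain ⟨b, hby, -⟩ := Set.not_subset.mp (h1 ∅ (by simp) y (Set.notMem_empty y))
  have hab : (a, b) ∈ codeUnion (fun x => Cslow x ×ˢ C₁ x) X := hsub ⟨hay, hby⟩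
  simp only [codeUnion, Set.mem_iUnion, exists_prop] at hab haX
  obtain ⟨x, hxX, hax, -⟩ := hab
  exact haX ⟨x, hxX, hax⟩
end

section
/- Let G be a 4-partite graph with parts A, B, C, D and let H be the associated digraph. Let a ∈ A, d ∈ D with {a,d} ∈ E(G), and suppose there exist b* ∈ B, c* ∈ C such that a, b*, c*, d form a 4-clique in G (all six pairs are edges of G). Then there exist |B'_{a,d}| + |C'_{a,d}| + 1 pairwise internally vertex-disjoint directed paths from a to d in H; in particular NC(a,d) ≥ |B'_{a,d}| + |C'_{a,d}| + 1. -/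
/-!
The paths are the two-arc paths `a → b → d` for `b ∈ B'_{a,d}`, the two-arc paths `a → c → d` for
`c ∈ C'_{a,d}`, and the three-arc path `a → b* → c* → d` given by the clique. The first two
kinds are internally disjoint because each has a single inner vertex, and distinct paths have
distinct inner vertices. The last one avoids them: `b*` is adjacent to `d` in `G`, hence
`b* ∉ B'_{a,d}`, and `c*` is adjacent to `a` in `G`, hence `c* ∉ C'_{a,d}`.
-/

/-- The vertex set of the digraph `H`, the disjoint union of the four parts
`A`, `B`, `C`, `D` of the `4`-partite graph `G`. -/
inductive V4 (A B C D : Type) where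
  | va : A → V4 A B C D
  | vb : B → V4 A B C D
  | vc : C → V4 A B C D
  | vd : D → V4 A B C D

/-- The arc relation of the digraph `H` associated with the `4`-partite graph `G`
whose edges between the parts are given by the relations `eAB, eBC, eCD, eAC, eBD`
(and `eAD`, which is not used by `H`): arcs `A → B`, `B → C`, `C → D` correspond to
edges of `G`, and arcs `A → C`, `B → D` correspond to non-edges of `G`. -/
def Hadj {A B C D : Type} (eAB : A → B → Prop) (eBC : B → C → Prop)
    (eCD : C → D → Prop) (eAC : A → C → Prop) (eBD : B → D → Prop) :
    V4 A B C D → V4 A B C D → Prop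
  | .va x, .vb y => eAB x y
  | .vb x, .vc y => eBC x y
  | .vc x, .vd y => eCD x y
  | .va x, .vc y => ¬ eAC x y
  | .vb x, .vd y => ¬ eBD x y
  | _, _ => False

/-- `RWalk r s t p` : `p` is the list of vertices of a directed path from `s` to `t`
in the digraph with arc relation `r`. -/
inductive RWalk {V : Type} (r : V → V → Prop) : V → V → List V → Prop
  | nil (v : V) : RWalk r v v [v]
  | cons {u v w : V} {p : List V} : r u v → RWalk r v w p → RWalk r u w (u :: p)

/-- `P` is a family of pairwise internally vertex-disjoint directed paths from `s`
to `t`: paths in the family share no vertices other than `s` and `t`. -/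
def IVDFamily {V : Type} (r : V → V → Prop) (s t : V) (P : Finset (List V)) : Prop :=
  (∀ p ∈ P, RWalk r s t p) ∧
    ∀ p ∈ P, ∀ q ∈ P, p ≠ q → ∀ v : V, v ∈ p → v ∈ q → v = s ∨ v = t

/-- The path of `H` attached to an index: `none` is the clique path through `b*` and `c*`, and
the other indices give the two-arc paths through a vertex of `S ⊆ B` or of `T ⊆ C`. -/
def indexedPath {A B C D : Type} (a : A) (d : D) (bs : B) (cs : C) (S : Set B) (T : Set C) :
    Option (S ⊕ T) → List (V4 A B C D)
  | none => [.va a, .vb bs, .vc cs, .vd d]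
  | some (.inl b) => [.va a, .vb b, .vd d]
  | some (.inr c) => [.va a, .vc c, .vd d]

/-- Paths with different indices meet only in their endpoints, as `b*` and `c*` are not among
the inner vertices of the two-arc paths. -/
lemma indexedPath_disjoint {A B C D : Type} (a : A) (d : D) (bs : B) (cs : C) (S : Set B)
    (T : Set C) (hbs : bs ∉ S) (hcs : cs ∉ T) (i j : Option (S ⊕ T)) (hij : i ≠ j)
    (v : V4 A B C D) (hi : v ∈ indexedPath a d bs cs S T i)
    (hj : v ∈ indexedPath a d bs cs S T j) : v = .va a ∨ v = .vd d := by
  rcases i with _ | ⟨b, hb⟩ | ⟨c, hc⟩ <;> rcases j with _ | ⟨b', hb'⟩ | ⟨c', hc'⟩ <;>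
    simp only [indexedPath, List.mem_cons, List.not_mem_nil, or_false] at hi hj <;> grind

lemma indexedPath_injective {A B C D : Type} (a : A) (d : D) (bs : B) (cs : C) (S : Set B)
    (T : Set C) : Function.Injective (indexedPath a d bs cs S T) := by
  rintro (_ | ⟨b, hb⟩ | ⟨c, hc⟩) (_ | ⟨b', hb'⟩ | ⟨c', hc'⟩) h <;> simp_all [indexedPath]

/-- If `{a,d} ∈ E(G)` and `a, b*, c*, d` form a `4`-clique in `G`, then there are
`|B'_{a,d}| + |C'_{a,d}| + 1` pairwise internally vertex-disjoint directed paths from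
`a` to `d` in `H`; in particular `NC(a,d) ≥ |B'_{a,d}| + |C'_{a,d}| + 1`. -/
theorem clique_implies_many_disjoint_paths
    {A B C D : Type} [Fintype A] [Fintype B] [Fintype C] [Fintype D]
    (eAB : A → B → Prop) (eAC : A → C → Prop) (eAD : A → D → Prop)
    (eBC : B → C → Prop) (eBD : B → D → Prop) (eCD : C → D → Prop)
    (a : A) (d : D) (had : eAD a d)
    (bs : B) (cs : C)
    (hclique : eAB a bs ∧ eAC a cs ∧ eBC bs cs ∧ eBD bs d ∧ eCD cs d) :
    ∃ P : Finset (List (V4 A B C D)),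
      IVDFamily (Hadj eAB eBC eCD eAC eBD) (V4.va a) (V4.vd d) P ∧
      P.card = {b : B | eAB a b ∧ ¬ eBD b d}.ncard
        + {c : C | ¬ eAC a c ∧ eCD c d}.ncard + 1 := by
  classical
  obtain ⟨hab, hac, hbc, hbd, hcd⟩ := hclique
  set S : Set B := {b : B | eAB a b ∧ ¬ eBD b d}
  set T : Set C := {c : C | ¬ eAC a c ∧ eCD c d}
  have hbs : bs ∉ S := fun h => h.2 hbd
  have hcs : cs ∉ T := fun h => h.1 hac
  refine ⟨Finset.univ.map ⟨_, indexedPath_injective a d bs cs S T⟩, ⟨?_, ?_⟩, ?_⟩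
  · intro p hp
    obtain ⟨i, -, rfl⟩ := Finset.mem_map.1 hp
    rcases i with _ | ⟨b, hb⟩ | ⟨c, hc⟩
    · exact .cons (v := V4.vb bs) hab (.cons (v := V4.vc cs) hbc
        (.cons (v := V4.vd d) hcd (.nil _)))
    · exact .cons (v := V4.vb b) hb.1 (.cons (v := V4.vd d) hb.2 (.nil _))
    · exact .cons (v := V4.vc c) hc.1 (.cons (v := V4.vd d) hc.2 (.nil _))
  · intro p hp q hq hpq v hvp hvq
    obtain ⟨i, -, rfl⟩ := Finset.mem_map.1 hp
    obtain ⟨j, -, rfl⟩ := Finset.mem_map.1 hq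
    exact indexedPath_disjoint a d bs cs S T hbs hcs i j (fun h => hpq (by rw [h])) v hvp hvq
  · rw [Finset.card_map, Finset.card_univ, Fintype.card_option, Fintype.card_sum,
      ← Nat.card_eq_fintype_card, ← Nat.card_eq_fintype_card, Nat.card_coe_set_eq,
      Nat.card_coe_set_eq]
end

section
/- Let G be a 4-partite graph with parts A, B, C, D and let H be the associated digraph. Let a ∈ A, d ∈ D with {a,d} ∈ E(G), and suppose there are no b ∈ B, c ∈ C such that a, b, c, d form a 4-clique in G. Then the node connectivity from a to d in H satisfies NC(a,d) = |B'_{a,d}| + |C'_{a,d}|. -/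
/-- The copy of `B'_{a,d} ∪ C'_{a,d}` inside the vertex set of `H`. -/
def cutSet {A B C D : Type} (eAB : A → B → Prop) (eCD : C → D → Prop)
    (eAC : A → C → Prop) (eBD : B → D → Prop) (a : A) (d : D) : Set (V4 A B C D) :=
  V4.vb '' {b : B | eAB a b ∧ ¬ eBD b d} ∪ V4.vc '' {c : C | ¬ eAC a c ∧ eCD c d}

lemma cutSet_finite {A B C D : Type} [Finite B] [Finite C] (eAB : A → B → Prop)
    (eCD : C → D → Prop) (eAC : A → C → Prop) (eBD : B → D → Prop) (a : A) (d : D) :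
    (cutSet eAB eCD eAC eBD a d).Finite :=
  ((Set.toFinite _).image _).union ((Set.toFinite _).image _)

lemma ncard_cutSet {A B C D : Type} [Finite B] [Finite C] (eAB : A → B → Prop)
    (eCD : C → D → Prop) (eAC : A → C → Prop) (eBD : B → D → Prop) (a : A) (d : D) :
    (cutSet eAB eCD eAC eBD a d).ncard = {b : B | eAB a b ∧ ¬ eBD b d}.ncard
      + {c : C | ¬ eAC a c ∧ eCD c d}.ncard := by
  unfold cutSet
  rw [Set.ncard_union_eq _ ((Set.toFinite _).image _) ((Set.toFinite _).image _),
    Set.ncard_image_of_injective _ (fun _ _ h => V4.vb.inj h),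
    Set.ncard_image_of_injective _ (fun _ _ h => V4.vc.inj h)]
  rw [Set.disjoint_left]
  rintro _ ⟨b, _, rfl⟩ ⟨c, _, h⟩
  cases h

lemma RWalk.head_mem {V : Type} {r : V → V → Prop} {s t : V} {p : List V}
    (h : RWalk r s t p) : s ∈ p := by
  cases h <;> simp

/-- No arc of `H` leaves `D`. -/
lemma RWalk.eq_of_vd {A B C D : Type} {eAB : A → B → Prop} {eBC : B → C → Prop}
    {eCD : C → D → Prop} {eAC : A → C → Prop} {eBD : B → D → Prop} {x d : D}
    {p : List (V4 A B C D)}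
    (h : RWalk (Hadj eAB eBC eCD eAC eBD) (V4.vd x) (V4.vd d) p) : x = d := by
  cases h with
  | nil => rfl
  | cons h _ => exact h.elim

lemma RWalk.arc_of_vc {A B C D : Type} {eAB : A → B → Prop} {eBC : B → C → Prop}
    {eCD : C → D → Prop} {eAC : A → C → Prop} {eBD : B → D → Prop} {c : C} {d : D}
    {p : List (V4 A B C D)}
    (h : RWalk (Hadj eAB eBC eCD eAC eBD) (V4.vc c) (V4.vd d) p) : eCD c d := by
  cases h with
  | @cons _ v _ _ h h' =>
    cases v with
    | vd x => exact h'.eq_of_vd ▸ h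
    | _ => exact h.elim

/-- In the absence of a `4`-clique on `a` and `d`, the set `cutSet` separates `a` from `d`. -/
lemma exists_mem_cutSet {A B C D : Type} {eAB : A → B → Prop} {eBC : B → C → Prop}
    {eCD : C → D → Prop} {eAC : A → C → Prop} {eBD : B → D → Prop} {a : A} {d : D}
    (hno : ∀ b c, eAB a b → eAC a c → eBC b c → eBD b d → ¬ eCD c d)
    {p : List (V4 A B C D)}
    (h : RWalk (Hadj eAB eBC eCD eAC eBD) (V4.va a) (V4.vd d) p) :
    ∃ v ∈ cutSet eAB eCD eAC eBD a d, v ∈ p := by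
  cases h with
  | @cons _ v _ _ hav hv =>
    cases v with
    | va => exact hav.elim
    | vd => exact hav.elim
    | vc c =>
      exact ⟨V4.vc c, Or.inr ⟨c, ⟨hav, hv.arc_of_vc⟩, rfl⟩, List.mem_cons_of_mem _ hv.head_mem⟩
    | vb b =>
      by_cases hbd : eBD b d
      · cases hv with
        | @cons _ w _ _ hbw hw =>
          cases w with
          | va => exact hbw.elim
          | vb => exact hbw.elim
          | vd x => exact absurd (hw.eq_of_vd ▸ hbd) hbw
          | vc c =>
            exact ⟨V4.vc c, Or.inr ⟨c, ⟨fun hac => hno b c hav hac hbw hbd hw.arc_of_vc,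
              hw.arc_of_vc⟩, rfl⟩,
              List.mem_cons_of_mem _ (List.mem_cons_of_mem _ hw.head_mem)⟩
      · exact ⟨V4.vb b, Or.inl ⟨b, ⟨hav, hbd⟩, rfl⟩, List.mem_cons_of_mem _ hv.head_mem⟩

/-- If `{a,d} ∈ E(G)` and no `b ∈ B`, `c ∈ C` complete a `4`-clique with `a` and `d`,
then the node connectivity from `a` to `d` in `H` equals `|B'_{a,d}| + |C'_{a,d}|`:
this many pairwise internally vertex-disjoint `a`-`d` paths exist, and no family of
pairwise internally vertex-disjoint `a`-`d` paths is larger. -/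
theorem no_clique_node_connectivity_eq
    {A B C D : Type} [Fintype A] [Fintype B] [Fintype C] [Fintype D]
    (eAB : A → B → Prop) (eAC : A → C → Prop) (eAD : A → D → Prop)
    (eBC : B → C → Prop) (eBD : B → D → Prop) (eCD : C → D → Prop)
    (a : A) (d : D) (had : eAD a d)
    (hno : ¬ ∃ (b : B) (c : C),
      eAB a b ∧ eAC a c ∧ eAD a d ∧ eBC b c ∧ eBD b d ∧ eCD c d) :
    (∃ P : Finset (List (V4 A B C D)),
        IVDFamily (Hadj eAB eBC eCD eAC eBD) (V4.va a) (V4.vd d) P ∧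
        P.card = {b : B | eAB a b ∧ ¬ eBD b d}.ncard
          + {c : C | ¬ eAC a c ∧ eCD c d}.ncard) ∧
    (∀ P : Finset (List (V4 A B C D)),
        IVDFamily (Hadj eAB eBC eCD eAC eBD) (V4.va a) (V4.vd d) P →
        P.card ≤ {b : B | eAB a b ∧ ¬ eBD b d}.ncard
          + {c : C | ¬ eAC a c ∧ eCD c d}.ncard) := by
  classical
  have hfin := cutSet_finite eAB eCD eAC eBD a d
  rw [← ncard_cutSet eAB eCD eAC eBD a d, Set.ncard_eq_toFinset_card _ hfin]
  refine ⟨⟨hfin.toFinset.image fun v => [V4.va a, v, V4.vd d], ⟨?_, ?_⟩, ?_⟩, ?_⟩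
  · simp only [Finset.mem_image, Set.Finite.mem_toFinset]
    rintro _ ⟨v, hv, rfl⟩
    rcases hv with ⟨b, ⟨hab, hbd⟩, rfl⟩ | ⟨c, ⟨hac, hcd⟩, rfl⟩
    · exact .cons (v := V4.vb b) hab (.cons (v := V4.vd d) hbd (.nil _))
    · exact .cons (v := V4.vc c) hac (.cons (v := V4.vd d) hcd (.nil _))
  · simp only [Finset.mem_image]
    rintro _ ⟨v, -, rfl⟩ _ ⟨w, -, rfl⟩ hne x hx hx'
    simp only [List.mem_cons, List.not_mem_nil, or_false] at hx hx'
    rcases hx with hx | rfl | hx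
    · exact Or.inl hx
    · rcases hx' with hx' | rfl | hx'
      · exact Or.inl hx'
      · exact absurd rfl hne
      · exact Or.inr hx'
    · exact Or.inr hx
  · refine Finset.card_image_of_injective _ fun v w h => ?_
    simpa using h
  · rintro P ⟨hwalk, hdisj⟩
    have hex : ∀ p ∈ P, ∃ v ∈ cutSet eAB eCD eAC eBD a d, v ∈ p := fun p hp =>
      exists_mem_cutSet (fun b c h₁ h₂ h₃ h₄ h₅ => hno ⟨b, c, h₁, h₂, had, h₃, h₄, h₅⟩)
        (hwalk p hp)
    have : Nonempty (V4 A B C D) := ⟨V4.va a⟩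
    -- Distinct paths share only `a` and `d`, which are not in the cut, so each cut vertex is
    -- assigned to at most one path.
    choose! f hf hfp using hex
    refine Finset.card_le_card_of_injOn f (fun p hp => by simpa using hf p hp) ?_
    intro p hp q hq hpq
    by_contra hne
    have hmem := hf p hp
    rcases hdisj p hp q hq hne (f p) (hfp p hp) (hpq ▸ hfp q hq) with h | h <;>
      simp [h, cutSet] at hmem
end
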